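/- arXiv:1502.06144 — 2 statements merged into one kernel-verified Lean document; each statement's English description precedes it below -/
import Mathlib

section
/- Fix k ≥ 1 and 0 < Δ < Δ_k, and for each n ≥ k let m = ⌈Δ n⌉ and let V = (V_1,…,V_m) be m i.i.d. uniform k-flats of F_2^n. Then P_unif(V is flat-satisfiable) → 1 as n → ∞. -/
open scoped BigOperators Classical
open Filter Topology

abbrev F2n (n : ℕ) := Fin n → ZMod 2

def IsFlat (n k : ℕ) (W : Set (F2n n)) : Prop :=
  ∃ A : AffineSubspace (ZMod 2) (F2n n),
    (A : Set (F2n n)) = W ∧ W.Nonempty ∧ Module.finrank (ZMod 2) A.direction = n - k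

def Flat (n k : ℕ) : Type := {W : Set (F2n n) // IsFlat n k W}

noncomputable instance (n k : ℕ) : Fintype (Flat n k) := by
  unfold Flat; exact Fintype.ofFinite _

noncomputable def q0 (n k : ℕ) : Flat n k → ℝ :=
  fun _ => (Fintype.card (Flat n k) : ℝ)⁻¹

noncomputable def qx (n k : ℕ) (x : F2n n) : Flat n k → ℝ :=
  fun W => if x ∈ W.1 then 0 else (Nat.card {W : Flat n k // x ∉ W.1} : ℝ)⁻¹

noncomputable def prob {α : Type*} [Fintype α] (p : α → ℝ) (E : Set α) : ℝ :=
  ∑ a, if a ∈ E then p a else 0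

noncomputable def expect {α : Type*} [Fintype α] (p : α → ℝ) (f : α → ℝ) : ℝ :=
  ∑ a, p a * f a

noncomputable def Punif (n k m : ℕ) : (Fin m → Flat n k) → ℝ :=
  fun V => ∏ j, q0 n k (V j)

noncomputable def Pplanted (n k m : ℕ) : (Fin m → Flat n k) → ℝ :=
  fun V => ((2:ℝ)^n)⁻¹ * ∑ x : F2n n, ∏ j, qx n k x (V j)

noncomputable def Z (n k m : ℕ) (V : Fin m → Flat n k) : ℕ :=
  Nat.card {x : F2n n // ∀ j, x ∉ (V j).1}

noncomputable def satCount (n k m : ℕ) (V : Fin m → Flat n k) (x : F2n n) : ℕ :=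
  Nat.card {j : Fin m // x ∉ (V j).1}

noncomputable def maxSat (n k m : ℕ) (V : Fin m → Flat n k) : ℕ :=
  Finset.univ.sup (fun x : F2n n => satCount n k m V x)

noncomputable def qxpi (n k : ℕ) (x : F2n n) (π : ℝ) : Flat n k → ℝ :=
  fun W => (1 - π) * q0 n k W + π * qx n k x W

noncomputable def Pplantedpi (n k m : ℕ) (π : ℝ) : (Fin m → Flat n k) → ℝ :=
  fun V => ((2:ℝ)^n)⁻¹ * ∑ x : F2n n, ∏ j, qxpi n k x π (V j)

noncomputable def DeltaK (k : ℕ) : ℝ :=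
  Real.log (1/2) / Real.log (1 - ((2:ℝ)^k)⁻¹)

/-!
Second moment method. For a point `x` let `E x` be the event that `x` lies in none of the sampled
flats; it has probability `(1 - 2⁻ᵏ) ^ m`, so the expected number of surviving points is
`μ = 2ⁿ (1 - 2⁻ᵏ) ^ m`, which grows exponentially in `n` when `Δ < DeltaK k`. The affine group acts
doubly transitively on the points and permutes the flats, and all flats have the same size; hence
the events that a random flat passes through two distinct points are negatively correlated, and so
are `E x` and `E y`. Cauchy–Schwarz then gives `P(⋃ x, E x) ≥ μ² / (μ² + μ) = 1 - 1 / (1 + μ)`.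
-/

lemma support_sum_indicator_one {α X : Type*} [Fintype X] (E : X → Set α) :
    Function.support (fun a => ∑ x, (E x).indicator (1 : α → ℝ) a) = ⋃ x, E x := by
  ext a
  have hnonneg : ∀ x ∈ Finset.univ, 0 ≤ (E x).indicator (1 : α → ℝ) a :=
    fun x _ => Set.indicator_nonneg (fun _ _ => zero_le_one) a
  simp [Finset.sum_eq_zero_iff_of_nonneg hnonneg]

section FiniteProbability

variable {α X : Type*} [Fintype α] {p : α → ℝ}

lemma prob_eq_expect_indicator (p : α → ℝ) (E : Set α) : prob p E = expect p (E.indicator 1) := by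
  simp [prob, expect, Set.indicator_apply]

lemma expect_sum [Fintype X] (p : α → ℝ) (f : X → α → ℝ) :
    expect p (fun a => ∑ x, f x a) = ∑ x, expect p (f x) := by
  simp only [expect, Finset.mul_sum]
  exact Finset.sum_comm

lemma expect_const (hp : ∑ a, p a = 1) (c : ℝ) : expect p (fun _ => c) = c := by
  rw [expect, ← Finset.sum_mul, hp, one_mul]

lemma prob_nonneg (hp : ∀ a, 0 ≤ p a) (E : Set α) : 0 ≤ prob p E :=
  Finset.sum_nonneg fun a _ => by split_ifs <;> simp [hp a]

lemma prob_inter_add_prob_inter_compl (p : α → ℝ) (A B : Set α) :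
    prob p (A ∩ B) + prob p (A ∩ Bᶜ) = prob p A := by
  rw [prob, prob, prob, ← Finset.sum_add_distrib]
  refine Finset.sum_congr rfl fun a _ => ?_
  by_cases hA : a ∈ A <;> by_cases hB : a ∈ B <;> simp [hA, hB]

lemma prob_add_prob_compl (p : α → ℝ) (E : Set α) : prob p E + prob p Eᶜ = ∑ a, p a := by
  simpa [prob] using prob_inter_add_prob_inter_compl p Set.univ E

lemma prob_le_one (hp : p ∈ stdSimplex ℝ α) (E : Set α) : prob p E ≤ 1 := by
  linarith [prob_add_prob_compl p E, prob_nonneg hp.1 Eᶜ, hp.2]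

lemma prob_preimage_equiv (σ : α ≃ α) (hσ : ∀ a, p (σ a) = p a) (E : Set α) :
    prob p (σ ⁻¹' E) = prob p E :=
  Fintype.sum_equiv σ _ _ fun a => by simp [hσ]

lemma expect_sum_indicator [Fintype X] (p : α → ℝ) (E : X → Set α) :
    expect p (fun a => ∑ x, (E x).indicator 1 a) = ∑ x, prob p (E x) := by
  simp only [expect_sum, prob_eq_expect_indicator]

lemma expect_sq_sum_indicator [Fintype X] (p : α → ℝ) (E : X → Set α) :
    expect p (fun a => (∑ x, (E x).indicator 1 a) ^ 2) = ∑ x, ∑ y, prob p (E x ∩ E y) := by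
  simp only [sq, Finset.sum_mul_sum, expect_sum, prob_eq_expect_indicator,
    Set.inter_indicator_one, Pi.mul_def]

lemma sq_expect_le_prob_support_mul_expect_sq (hp : ∀ a, 0 ≤ p a) (f : α → ℝ) :
    expect p f ^ 2 ≤ prob p (Function.support f) * expect p (fun a => f a ^ 2) := by
  refine Finset.sum_sq_le_sum_mul_sum_of_sq_le_mul _ (fun a _ => ?_) (fun a _ => ?_) fun a _ => ?_
  · split_ifs <;> simp [hp a]
  · exact mul_nonneg (hp a) (sq_nonneg _)
  · rw [mul_pow, sq (p a), mul_assoc]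
    by_cases ha : f a = 0 <;> simp [ha]

end FiniteProbability

section Product

variable {ι : Type*} [Fintype ι] [DecidableEq ι] {α : ι → Type*} [∀ i, Fintype (α i)]

lemma prob_pi (q : ∀ i, α i → ℝ) (E : ∀ i, Set (α i)) :
    prob (fun V => ∏ i, q i (V i)) (Set.univ.pi E) = ∏ i, prob (q i) (E i) := by
  simp only [prob, Finset.prod_univ_sum, Fintype.piFinset_univ, Set.mem_univ_pi]
  refine Finset.sum_congr rfl fun V _ => ?_
  rw [Finset.prod_ite_zero]
  simp

lemma prod_mem_stdSimplex {q : ∀ i, α i → ℝ} (hq : ∀ i, q i ∈ stdSimplex ℝ (α i)) :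
    (fun V => ∏ i, q i (V i)) ∈ stdSimplex ℝ (∀ i, α i) := by
  refine ⟨fun V => Finset.prod_nonneg fun i _ => (hq i).1 (V i), ?_⟩
  rw [← Fintype.piFinset_univ, ← Finset.prod_univ_sum]
  exact Finset.prod_eq_one fun i _ => (hq i).2

end Product

/-- Two events are negatively correlated under the weight `p` when their covariance is nonpositive.
Equality is allowed, so independent events count as negatively correlated. -/
def NegCorrelated {α : Type*} [Fintype α] (p : α → ℝ) (A B : Set α) : Prop :=
  prob p (A ∩ B) ≤ prob p A * prob p B

section NegCorrelated

variable {α X : Type*} [Fintype α] {p : α → ℝ}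

lemma NegCorrelated.compl (hp : ∑ a, p a = 1) {A B : Set α} (h : NegCorrelated p A B) :
    NegCorrelated p Aᶜ Bᶜ := by
  have hA := prob_add_prob_compl p A
  have hB := prob_add_prob_compl p B
  have hBA := prob_inter_add_prob_inter_compl p B A
  have hA'B := prob_inter_add_prob_inter_compl p Aᶜ B
  rw [Set.inter_comm B A, Set.inter_comm B Aᶜ] at hBA
  have hA' : prob p Aᶜ = 1 - prob p A := by linarith
  have hB' : prob p Bᶜ = 1 - prob p B := by linarith
  rw [NegCorrelated] at h ⊢
  rw [hA', hB']
  linarith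

lemma NegCorrelated.pi {ι : Type*} [Fintype ι] [DecidableEq ι] {α : ι → Type*}
    [∀ i, Fintype (α i)] {q : ∀ i, α i → ℝ} (hq : ∀ i a, 0 ≤ q i a) {A B : ∀ i, Set (α i)}
    (h : ∀ i, NegCorrelated (q i) (A i) (B i)) :
    NegCorrelated (fun V => ∏ i, q i (V i)) (Set.univ.pi A) (Set.univ.pi B) := by
  rw [NegCorrelated, ← Set.pi_inter_distrib, prob_pi, prob_pi, prob_pi, ← Finset.prod_mul_distrib]
  exact Finset.prod_le_prod (fun i _ => prob_nonneg (hq i) _) fun i _ => h i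

lemma expect_sq_sum_indicator_le [Fintype X] {E : X → Set α}
    (hE : Pairwise fun x y => NegCorrelated p (E x) (E y)) :
    expect p (fun a => (∑ x, (E x).indicator 1 a) ^ 2) ≤
      (∑ x, prob p (E x)) ^ 2 + ∑ x, prob p (E x) := by
  calc expect p (fun a => (∑ x, (E x).indicator 1 a) ^ 2)
    _ = ∑ x, ∑ y, prob p (E x ∩ E y) := expect_sq_sum_indicator p E
    _ ≤ ∑ x, ∑ y, (prob p (E x) * prob p (E y) + if x = y then prob p (E x) else 0) := by
        refine Finset.sum_le_sum fun x _ => Finset.sum_le_sum fun y _ => ?_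
        split_ifs with hxy
        · simpa [← hxy] using mul_self_nonneg (prob p (E x))
        · rw [add_zero]
          exact hE hxy
    _ = (∑ x, prob p (E x)) ^ 2 + ∑ x, prob p (E x) := by
        simp [Finset.sum_add_distrib, ← Finset.sum_mul_sum, sq]

theorem one_sub_inv_one_add_sum_prob_le_prob_iUnion [Fintype X] (hp : ∀ a, 0 ≤ p a)
    {E : X → Set α} (hE : Pairwise fun x y => NegCorrelated p (E x) (E y)) :
    1 - (1 + ∑ x, prob p (E x))⁻¹ ≤ prob p (⋃ x, E x) := by
  have hmoment := sq_expect_le_prob_support_mul_expect_sq hp fun a => ∑ x, (E x).indicator 1 a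
  rw [expect_sum_indicator, support_sum_indicator_one] at hmoment
  have hsq := mul_le_mul_of_nonneg_left (expect_sq_sum_indicator_le hE)
    (prob_nonneg hp (⋃ x, E x))
  set μ := ∑ x, prob p (E x)
  have hμ : 0 ≤ μ := Finset.sum_nonneg fun x _ => prob_nonneg hp (E x)
  rcases hμ.eq_or_lt with h0 | hpos
  · simpa [← h0] using prob_nonneg hp (⋃ x, E x)
  · calc 1 - (1 + μ)⁻¹ = μ / (1 + μ) := by
          rw [inv_eq_one_div, one_sub_div (by positivity), add_sub_cancel_left]
      _ ≤ prob p (⋃ x, E x) :=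
          (div_le_iff₀ (by positivity)).2 (le_of_mul_le_mul_left (by linarith) hpos)

lemma sum_prob_eq_of_forall_sum_indicator_eq [Fintype X] (hp : ∑ a, p a = 1) {E : X → Set α}
    {L : ℝ} (hL : ∀ a, ∑ x, (E x).indicator 1 a = L) : ∑ x, prob p (E x) = L := by
  rw [← expect_sum_indicator]
  simp only [hL, expect_const hp]

/-- The number of occurring events has variance zero, so the covariances of all pairs of events sum
to zero; those on the diagonal are variances, so the common off-diagonal value is nonpositive. -/
theorem negCorrelated_of_forall_sum_indicator_eq [Fintype X] (hp : p ∈ stdSimplex ℝ α)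
    {E : X → Set α} {L : ℝ} (hL : ∀ a, ∑ x, (E x).indicator 1 a = L)
    (h₁ : ∀ x y, prob p (E x) = prob p (E y))
    (h₂ : ∀ x y x' y', x ≠ y → x' ≠ y' → prob p (E x ∩ E y) = prob p (E x' ∩ E y')) :
    Pairwise fun x y => NegCorrelated p (E x) (E y) := by
  intro x y hxy
  let cov (z w : X) : ℝ := prob p (E z ∩ E w) - prob p (E z) * prob p (E w)
  have hsum : ∑ z, ∑ w, cov z w = 0 := by
    simp only [cov, Finset.sum_sub_distrib, ← expect_sq_sum_indicator, ← Finset.sum_mul_sum, hL,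
      expect_const hp.2, sum_prob_eq_of_forall_sum_indicator_eq hp.2 hL]
    ring
  have hdiag (z : X) : 0 ≤ cov z z := by
    simp only [cov, Set.inter_self]
    nlinarith [prob_nonneg hp.1 (E z), prob_le_one hp (E z)]
  have hoff (z w : X) (hzw : z ≠ w) : cov z w = cov x y := by
    simp only [cov, h₂ z w x y hzw hxy, h₁ z x, h₁ w y]
  by_contra hneg
  have hpos : 0 < cov x y := sub_pos.2 (not_le.1 hneg)
  have hnonneg (z w : X) : 0 ≤ cov z w := by
    rcases eq_or_ne z w with rfl | hzw
    · exact hdiag z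
    · exact hoff z w hzw ▸ hpos.le
  have hsum_pos : 0 < ∑ z, ∑ w, cov z w :=
    Finset.sum_pos' (fun z _ => Finset.sum_nonneg fun w _ => hnonneg z w)
      ⟨x, Finset.mem_univ x,
        Finset.sum_pos' (fun w _ => hnonneg x w) ⟨y, Finset.mem_univ y, hpos⟩⟩
  exact hsum_pos.ne' hsum

end NegCorrelated

section AffineTransitivity

variable {K V P : Type*} [DivisionRing K] [AddCommGroup V] [Module K V] [AddTorsor V P]

lemma exists_linearEquiv_apply_eq {v w : V} (hv : v ≠ 0) (hw : w ≠ 0) :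
    ∃ g : V ≃ₗ[K] V, g v = w := by
  let toSpan (u : V) (hu : u ≠ 0) := LinearEquiv.toSpanNonzeroSingleton K V u hu
  obtain ⟨g, hg⟩ := Submodule.exists_linearEquiv_restrict_eq ((toSpan v hv).symm ≪≫ₗ toSpan w hw)
  refine ⟨g, ?_⟩
  have hgv := hg (toSpan v hv 1)
  rw [LinearEquiv.trans_apply, LinearEquiv.symm_apply_apply] at hgv
  simpa [toSpan] using hgv.symm

lemma exists_affineEquiv_apply_eq (x x' : P) : ∃ e : P ≃ᵃ[K] P, e x = x' :=
  ⟨AffineEquiv.constVAdd K P (x' -ᵥ x), vsub_vadd x' x⟩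

lemma exists_affineEquiv_apply_eq_apply_eq {x y x' y' : P} (h : x ≠ y) (h' : x' ≠ y') :
    ∃ e : P ≃ᵃ[K] P, e x = x' ∧ e y = y' := by
  obtain ⟨g, hg⟩ := exists_linearEquiv_apply_eq (K := K) (vsub_ne_zero.2 h.symm)
    (vsub_ne_zero.2 h'.symm)
  refine ⟨(AffineEquiv.vaddConst K x).symm.trans
    (g.toAffineEquiv.trans (AffineEquiv.vaddConst K x')), ?_, ?_⟩
  · simp
  · simp [hg]

end AffineTransitivity

section Flat

variable {n k : ℕ}

lemma IsFlat.natCard {W : Set (F2n n)} (hW : IsFlat n k W) : Nat.card W = 2 ^ (n - k) := by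
  obtain ⟨A, rfl, hne, hA⟩ := hW
  have : Nonempty A := hne.to_subtype
  calc Nat.card A = Nat.card A.direction :=
        (Nat.card_congr (Equiv.vaddConst (Classical.arbitrary A))).symm
    _ = 2 ^ (n - k) := by rw [Module.natCard_eq_pow_finrank (K := ZMod 2), hA, Nat.card_zmod]

lemma IsFlat.image {W : Set (F2n n)} (hW : IsFlat n k W) (e : F2n n ≃ᵃ[ZMod 2] F2n n) :
    IsFlat n k (e '' W) := by
  obtain ⟨A, rfl, hne, hA⟩ := hW
  refine ⟨A.map e.toAffineMap, rfl, hne.image e, ?_⟩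
  rw [AffineSubspace.map_direction, ← hA]
  exact LinearEquiv.finrank_map_eq e.linear A.direction

lemma isFlat_image_iff (e : F2n n ≃ᵃ[ZMod 2] F2n n) (W : Set (F2n n)) :
    IsFlat n k (e '' W) ↔ IsFlat n k W := by
  refine ⟨fun h => ?_, fun h => h.image e⟩
  simpa [Set.image_image] using h.image e.symm

namespace Flat

instance (n k : ℕ) : Nonempty (Flat n k) := by
  have hle : n - k ≤ Module.finrank (ZMod 2) (F2n n) := by simp
  obtain ⟨f, hf⟩ := exists_linearIndependent_of_le_finrank hle
  refine ⟨_, (Submodule.span (ZMod 2) (Set.range f)).toAffineSubspace, rfl,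
    ⟨0, Submodule.zero_mem _⟩, ?_⟩
  rw [Submodule.toAffineSubspace_direction, finrank_span_eq_card hf, Fintype.card_fin]

/-- The permutation of the `k`-flats induced by an affine automorphism of the ambient space, sending
a flat to its image. It transports the symmetry of the affine group to the uniform flat. -/
def mapEquiv (e : F2n n ≃ᵃ[ZMod 2] F2n n) : Flat n k ≃ Flat n k :=
  (Equiv.Set.congr e.toEquiv).subtypeEquiv fun W => (isFlat_image_iff e W).symm

/-- The event that a `k`-flat passes through the point `x`. -/
def through (n k : ℕ) (x : F2n n) : Set (Flat n k) := {W | x ∈ W.1}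

lemma preimage_mapEquiv_through (e : F2n n ≃ᵃ[ZMod 2] F2n n) (x : F2n n) :
    mapEquiv e ⁻¹' through n k (e x) = through n k x :=
  Set.ext fun _ => e.injective.mem_set_image

lemma sum_indicator_through (W : Flat n k) :
    ∑ x, (through n k x).indicator 1 W = (2 : ℝ) ^ (n - k) := by
  calc ∑ x, (through n k x).indicator 1 W = ((Nat.card W.1 : ℕ) : ℝ) := by
        rw [Nat.card_eq_fintype_card, Fintype.card_subtype]
        simp [Set.indicator_apply, through]
    _ = 2 ^ (n - k) := by rw [W.2.natCard, Nat.cast_pow, Nat.cast_ofNat]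

end Flat

open Flat

lemma q0_mem_stdSimplex (n k : ℕ) : q0 n k ∈ stdSimplex ℝ (Flat n k) := by
  constructor <;> simp [q0]

lemma prob_q0_through_eq (x y : F2n n) :
    prob (q0 n k) (through n k x) = prob (q0 n k) (through n k y) := by
  obtain ⟨e, rfl⟩ := exists_affineEquiv_apply_eq (K := ZMod 2) x y
  rw [← preimage_mapEquiv_through e, prob_preimage_equiv _ fun _ => rfl]

lemma prob_q0_through_inter_eq {x y x' y' : F2n n} (h : x ≠ y) (h' : x' ≠ y') :
    prob (q0 n k) (through n k x ∩ through n k y) =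
      prob (q0 n k) (through n k x' ∩ through n k y') := by
  obtain ⟨e, rfl, rfl⟩ := exists_affineEquiv_apply_eq_apply_eq (K := ZMod 2) h h'
  rw [← preimage_mapEquiv_through e x, ← preimage_mapEquiv_through e y, ← Set.preimage_inter,
    prob_preimage_equiv _ fun _ => rfl]

lemma negCorrelated_q0_through (n k : ℕ) :
    Pairwise fun x y => NegCorrelated (q0 n k) (through n k x) (through n k y) :=
  negCorrelated_of_forall_sum_indicator_eq (q0_mem_stdSimplex n k) sum_indicator_through
    prob_q0_through_eq fun _ _ _ _ => prob_q0_through_inter_eq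

lemma prob_q0_through (hkn : k ≤ n) (x : F2n n) :
    prob (q0 n k) (through n k x) = ((2 : ℝ) ^ k)⁻¹ := by
  have hsum : ∑ y, prob (q0 n k) (through n k y) = (2 : ℝ) ^ (n - k) :=
    sum_prob_eq_of_forall_sum_indicator_eq (q0_mem_stdSimplex n k).2 sum_indicator_through
  simp only [prob_q0_through_eq _ x, Finset.sum_const, Finset.card_univ, nsmul_eq_mul] at hsum
  have hcard : (Fintype.card (F2n n) : ℝ) = 2 ^ n := by simp
  rw [hcard, pow_sub₀ _ two_ne_zero hkn] at hsum
  exact mul_left_cancel₀ (by positivity) hsum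

lemma prob_q0_compl_through (hkn : k ≤ n) (x : F2n n) :
    prob (q0 n k) (through n k x)ᶜ = 1 - ((2 : ℝ) ^ k)⁻¹ := by
  linarith [prob_add_prob_compl (q0 n k) (through n k x), prob_q0_through hkn x,
    (q0_mem_stdSimplex n k).2]

lemma Punif_mem_stdSimplex (n k m : ℕ) : Punif n k m ∈ stdSimplex ℝ (Fin m → Flat n k) :=
  prod_mem_stdSimplex fun _ => q0_mem_stdSimplex n k

lemma setOf_Z_pos (n k m : ℕ) :
    {V | 0 < Z n k m V} = ⋃ x, Set.univ.pi fun _ => (through n k x)ᶜ := by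
  ext V
  rw [Set.mem_ofPred_eq, Z, Finite.card_pos_iff, nonempty_subtype]
  simp [through]

theorem one_sub_inv_le_prob_Z_pos (hkn : k ≤ n) (m : ℕ) :
    1 - (1 + (2 : ℝ) ^ n * (1 - ((2 : ℝ) ^ k)⁻¹) ^ m)⁻¹ ≤
      prob (Punif n k m) {V | 0 < Z n k m V} := by
  let avoids (x : F2n n) : Set (Fin m → Flat n k) := Set.univ.pi fun _ => (through n k x)ᶜ
  have hprob (x : F2n n) : prob (Punif n k m) (avoids x) = (1 - ((2 : ℝ) ^ k)⁻¹) ^ m := by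
    calc prob (Punif n k m) (avoids x) = ∏ _j : Fin m, prob (q0 n k) (through n k x)ᶜ :=
          prob_pi _ _
      _ = (1 - ((2 : ℝ) ^ k)⁻¹) ^ m := by simp [prob_q0_compl_through hkn]
  have hneg : Pairwise fun x y => NegCorrelated (Punif n k m) (avoids x) (avoids y) :=
    fun _ _ hxy => NegCorrelated.pi (fun _ => (q0_mem_stdSimplex n k).1)
      fun _ => (negCorrelated_q0_through n k hxy).compl (q0_mem_stdSimplex n k).2
  simpa [hprob, setOf_Z_pos, avoids] using
    one_sub_inv_one_add_sum_prob_le_prob_iUnion (Punif_mem_stdSimplex n k m).1 hneg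

end Flat

section Asymptotics

lemma one_sub_inv_two_pow_pos {k : ℕ} (hk : 1 ≤ k) : 0 < 1 - ((2 : ℝ) ^ k)⁻¹ :=
  sub_pos.2 (inv_lt_one_of_one_lt₀ (one_lt_pow₀ one_lt_two (by lia)))

lemma one_lt_two_mul_rpow_of_lt_DeltaK {k : ℕ} (hk : 1 ≤ k) {Δ : ℝ} (h : Δ < DeltaK k) :
    1 < 2 * (1 - ((2 : ℝ) ^ k)⁻¹) ^ Δ := by
  have hr0 := one_sub_inv_two_pow_pos hk
  have hlog : Real.log (1 - ((2 : ℝ) ^ k)⁻¹) < 0 := Real.log_neg hr0 (by simp)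
  rw [DeltaK, lt_div_iff_of_neg hlog, one_div, Real.log_inv] at h
  rw [← Real.log_pos_iff (by positivity), Real.log_mul two_ne_zero (by positivity),
    Real.log_rpow hr0]
  linarith

lemma tendsto_pow_mul_pow_ceil_atTop {a r Δ : ℝ} (hr0 : 0 < r) (hr1 : r ≤ 1) (hΔ : 0 ≤ Δ)
    (h : 1 < a * r ^ Δ) :
    Tendsto (fun n : ℕ => a ^ n * r ^ ⌈Δ * (n : ℝ)⌉₊) atTop atTop := by
  have ha : 0 < a := pos_of_mul_pos_left (zero_lt_one.trans h) (by positivity)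
  refine tendsto_atTop_mono (fun n => ?_)
    ((tendsto_pow_atTop_atTop_of_one_lt h).atTop_mul_const hr0)
  calc (a * r ^ Δ) ^ n * r = a ^ n * r ^ (Δ * n + 1) := by
        rw [Real.rpow_add_one hr0.ne', Real.rpow_mul_natCast hr0.le, mul_pow, mul_assoc]
    _ ≤ a ^ n * r ^ (⌈Δ * (n : ℝ)⌉₊ : ℝ) := by
        gcongr a ^ n * ?_
        exact Real.rpow_le_rpow_of_exponent_ge hr0 hr1 (Nat.ceil_lt_add_one (by positivity)).le
    _ = a ^ n * r ^ ⌈Δ * (n : ℝ)⌉₊ := by rw [Real.rpow_natCast]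

end Asymptotics

theorem stmt5 (k : ℕ) (hk : 1 ≤ k) (Δ : ℝ) (hΔ : 0 < Δ) (hΔk : Δ < DeltaK k) :
    Tendsto (fun n : ℕ =>
        prob (Punif n k ⌈Δ * (n:ℝ)⌉₊) {V | 0 < Z n k ⌈Δ * (n:ℝ)⌉₊ V})
      atTop (nhds 1) := by
  have hmean : Tendsto (fun n : ℕ => (2 : ℝ) ^ n * (1 - ((2 : ℝ) ^ k)⁻¹) ^ ⌈Δ * (n : ℝ)⌉₊)
      atTop atTop :=
    tendsto_pow_mul_pow_ceil_atTop (one_sub_inv_two_pow_pos hk) (by simp) hΔ.le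
      (one_lt_two_mul_rpow_of_lt_DeltaK hk hΔk)
  have hlower := (tendsto_atTop_add_const_left _ 1 hmean).inv_tendsto_atTop.const_sub 1
  rw [sub_zero] at hlower
  refine tendsto_of_tendsto_of_tendsto_of_le_of_le' hlower tendsto_const_nhds ?_ ?_
  · filter_upwards [eventually_ge_atTop k] with n hkn
    exact one_sub_inv_le_prob_Z_pos hkn _
  · exact .of_forall fun n => prob_le_one (Punif_mem_stdSimplex n k _) _
end

section
/- Let 1 ≤ k ≤ n, m ≥ 1, α > 0, and let V = (V_1,…,V_m) be m i.i.d. uniform k-flats of F_2^n (law P_unif). Then P_unif( σ(V) > ((1 − 2^{−k}) + α) m ) ≤ 2^n · exp(−2 α² m). -/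
open scoped BigOperators Classical
open Filter Topology

/-! The number of flats avoiding a fixed point `x` is a sum of `m` independent Bernoulli variables.
Translations permute the flats and act transitively on points, so double counting the incidences
between points and flats gives each of them mean `1 - 2⁻ᵏ`. Hoeffding's inequality bounds the upper
tail at `x` by `exp (-2 α² m)`, and a union bound over the `2ⁿ` points gives the theorem. -/

open MeasureTheory ProbabilityTheory
open scoped Pointwise

section Hoeffding

variable {Ω ι : Type*} [MeasurableSpace Ω] {μ : Measure Ω}

theorem measureReal_sum_integral_add_le_sum_le [IsProbabilityMeasure μ] {X : ι → Ω → ℝ}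
    {s : Finset ι} {a b : ι → ℝ} (hindep : iIndepFun X μ) (hmeas : ∀ i ∈ s, AEMeasurable (X i) μ)
    (hbdd : ∀ i ∈ s, ∀ᵐ ω ∂μ, X i ω ∈ Set.Icc (a i) (b i)) {ε : ℝ} (hε : 0 ≤ ε) :
    μ.real {ω | ∑ i ∈ s, μ[X i] + ε ≤ ∑ i ∈ s, X i ω} ≤
      Real.exp (-2 * ε ^ 2 / ∑ i ∈ s, (b i - a i) ^ 2) := by
  have hcentered : iIndepFun (fun i ω => X i ω - μ[X i]) μ :=
    hindep.comp (fun i x => x - ∫ ω, X i ω ∂μ) fun i => measurable_id.sub_const _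
  have htail := HasSubgaussianMGF.measure_sum_ge_le_of_iIndepFun hcentered
    (fun i hi => hasSubgaussianMGF_of_mem_Icc (hmeas i hi) (hbdd i hi)) hε
  have hproxy : (2 * ∑ i ∈ s, (((‖b i - a i‖₊ / 2) ^ 2 : NNReal) : ℝ)) =
      (∑ i ∈ s, (b i - a i) ^ 2) / 2 := by
    rw [Finset.mul_sum, Finset.sum_div]
    refine Finset.sum_congr rfl fun i _ => ?_
    push_cast
    rw [div_pow, Real.norm_eq_abs, sq_abs]
    ring
  rw [NNReal.coe_sum, hproxy] at htail
  convert! htail using 2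
  · simp only [Finset.sum_sub_distrib, le_sub_iff_add_le']
  · rw [div_div_eq_mul_div]
    ring

variable [IsProbabilityMeasure μ] [Fintype ι]

theorem measureReal_pi_add_mul_le_card_mem_le {A : Set Ω} (hA : MeasurableSet A) {ε : ℝ}
    (hε : 0 ≤ ε) :
    (Measure.pi fun _ : ι => μ).real
        {ω | (μ.real A + ε) * Fintype.card ι ≤ Nat.card {i // ω i ∈ A}} ≤
      Real.exp (-2 * ε ^ 2 * Fintype.card ι) := by
  let X : ι → (ι → Ω) → ℝ := fun i ω => A.indicator 1 (ω i)
  have hind : Measurable (A.indicator (1 : Ω → ℝ)) := measurable_one.indicator hA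
  have hindep : iIndepFun X (Measure.pi fun _ : ι => μ) :=
    iIndepFun_pi fun _ => hind.aemeasurable
  have hmean (i : ι) : ∫ ω, X i ω ∂(Measure.pi fun _ : ι => μ) = μ.real A := by
    rw [← integral_indicator_one hA]
    exact integral_comp_eval (μ := fun _ : ι => μ) hind.aestronglyMeasurable
  have hcount (ω : ι → Ω) : ∑ i, X i ω = Nat.card {i // ω i ∈ A} := by
    rw [Nat.card_eq_fintype_card, Fintype.card_subtype, ← Finset.sum_boole]
    rfl
  have htail := measureReal_sum_integral_add_le_sum_le (s := Finset.univ) (a := 0) (b := 1) hindep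
    (fun i _ => (hind.comp (measurable_pi_apply i)).aemeasurable)
    (fun i _ => ae_of_all _ fun ω => ⟨Set.indicator_nonneg (fun _ _ => zero_le_one) _,
      Set.indicator_le_self' (fun _ _ => zero_le_one) _⟩)
    (mul_nonneg hε (Nat.cast_nonneg (Fintype.card ι)))
  simp only [hmean, hcount, Finset.sum_const, Finset.card_univ, nsmul_eq_mul, Pi.one_apply,
    Pi.zero_apply, sub_zero, one_pow, mul_one] at htail
  convert! htail using 2
  · rw [add_mul, mul_comm (μ.real A)]
  · rcases eq_or_ne (Fintype.card ι : ℝ) 0 with h | h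
    · simp [h]
    · field_simp

theorem measureReal_pi_exists_add_mul_le_card_mem_le {T : Type*} [Fintype T] {A : T → Set Ω}
    (hA : ∀ x, MeasurableSet (A x)) {p ε : ℝ} (hp : ∀ x, μ.real (A x) ≤ p) (hε : 0 ≤ ε) :
    (Measure.pi fun _ : ι => μ).real
        {ω | ∃ x, (p + ε) * Fintype.card ι ≤ Nat.card {i // ω i ∈ A x}} ≤
      Fintype.card T * Real.exp (-2 * ε ^ 2 * Fintype.card ι) := by
  have hpoint (x : T) : (Measure.pi fun _ : ι => μ).real
      {ω | (p + ε) * Fintype.card ι ≤ Nat.card {i // ω i ∈ A x}} ≤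
        Real.exp (-2 * ε ^ 2 * Fintype.card ι) := by
    refine le_trans (measureReal_mono fun ω hω => ?_)
      (measureReal_pi_add_mul_le_card_mem_le (hA x) hε)
    refine le_trans ?_ (Set.mem_ofPred.1 hω)
    gcongr
    exact hp x
  rw [Set.ofPred_exists]
  calc _ ≤ ∑ x, (Measure.pi fun _ : ι => μ).real
        {ω | (p + ε) * Fintype.card ι ≤ Nat.card {i // ω i ∈ A x}} :=
      measureReal_iUnion_fintype_le _
    _ ≤ ∑ _x : T, Real.exp (-2 * ε ^ 2 * Fintype.card ι) := Finset.sum_le_sum fun x _ => hpoint x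
    _ = _ := by rw [Finset.sum_const, Finset.card_univ, nsmul_eq_mul]

end Hoeffding

theorem measureReal_uniformOn_univ_finset {β : Type*} [Fintype β] [MeasurableSpace β]
    [MeasurableSingletonClass β] (s : Finset β) :
    (uniformOn Set.univ).real (s : Set β) = s.card / Fintype.card β := by
  rw [measureReal_def, uniformOn_univ, Measure.count_apply_finset, ENNReal.toReal_div,
    ENNReal.toReal_natCast, ENNReal.toReal_natCast]

theorem natCard_affineSubspace {K V P : Type*} [DivisionRing K] [AddCommGroup V] [Module K V]
    [AddTorsor V P] (A : AffineSubspace K P) [Nonempty A] [FiniteDimensional K A.direction] :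
    Nat.card A = Nat.card K ^ Module.finrank K A.direction := by
  obtain ⟨p⟩ := ‹Nonempty A›
  rw [← Nat.card_congr (Equiv.vaddConst p), Module.natCard_eq_pow_finrank (K := K)]

theorem IsFlat.vadd {n k : ℕ} {W : Set (F2n n)} (hW : IsFlat n k W) (v : F2n n) :
    IsFlat n k (v +ᵥ W) := by
  obtain ⟨A, rfl, hne, hdim⟩ := hW
  exact ⟨v +ᵥ A, A.coe_pointwise_vadd v, hne.vadd_set,
    by rw [AffineSubspace.pointwise_vadd_direction, hdim]⟩

namespace Flat

variable {n k : ℕ}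

instance : Nonempty (Flat n k) := by
  obtain ⟨v, hv⟩ := exists_linearIndependent_of_le_finrank (R := ZMod 2) (M := F2n n)
    (n := n - k) (by rw [Module.finrank_fin_fun]; exact n.sub_le k)
  refine ⟨⟨_, (Submodule.span (ZMod 2) (Set.range v)).toAffineSubspace, rfl,
    ⟨0, zero_mem (Submodule.span (ZMod 2) (Set.range v))⟩, ?_⟩⟩
  rw [Submodule.toAffineSubspace_direction, finrank_span_eq_card hv, Fintype.card_fin]

/-- The action of `F2n n` on the flats by translation. -/
instance : AddAction (F2n n) (Flat n k) where
  vadd v W := ⟨v +ᵥ W.1, W.2.vadd v⟩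
  zero_vadd W := Subtype.ext (zero_vadd _ W.1)
  add_vadd v w W := Subtype.ext (add_vadd v w W.1)

theorem vadd_mem_vadd_iff {v x : F2n n} {W : Flat n k} : v +ᵥ x ∈ (v +ᵥ W).1 ↔ x ∈ W.1 :=
  Set.vadd_mem_vadd_set_iff

theorem natCard_coe (W : Flat n k) : Nat.card W.1 = 2 ^ (n - k) := by
  obtain ⟨A, hA, hne, hdim⟩ := W.2
  rw [← hA] at hne ⊢
  have : Nonempty A := hne.to_subtype
  have hcard := natCard_affineSubspace A
  rwa [hdim, Nat.card_zmod] at hcard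

theorem card_filter_mem_eq (x y : F2n n) :
    Finset.card {W : Flat n k | x ∈ W.1} = Finset.card {W : Flat n k | y ∈ W.1} := by
  refine Finset.card_equiv (AddAction.toPerm (y - x)) fun W => ?_
  have hmem := vadd_mem_vadd_iff (v := y - x) (x := x) (W := W)
  rw [vadd_eq_add, sub_add_cancel] at hmem
  simpa using hmem.symm

theorem card_filter_mem_mul_two_pow (hkn : k ≤ n) (x : F2n n) :
    Finset.card {W : Flat n k | x ∈ W.1} * 2 ^ k = Fintype.card (Flat n k) := by
  have hpoints (W : Flat n k) : Finset.card {y : F2n n | y ∈ W.1} = 2 ^ (n - k) := by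
    rw [← natCard_coe W, Nat.card_eq_fintype_card, ← Fintype.card_subtype]
  have hincidence : 2 ^ n * Finset.card {W : Flat n k | x ∈ W.1} =
      Fintype.card (Flat n k) * 2 ^ (n - k) := by
    have h := Finset.card_mul_eq_card_mul (s := (Finset.univ : Finset (F2n n)))
      (t := (Finset.univ : Finset (Flat n k))) (fun (y : F2n n) (W : Flat n k) => y ∈ W.1)
      (fun y _ => card_filter_mem_eq (k := k) y x) (fun W _ => hpoints W)
    rwa [Finset.card_univ, Finset.card_univ, Fintype.card_fun, ZMod.card, Fintype.card_fin] at h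
  refine Nat.eq_of_mul_eq_mul_right (pow_pos two_pos (n - k)) ?_
  rw [← hincidence, mul_assoc, ← pow_add, Nat.add_sub_of_le hkn, mul_comm]

/-- The discrete σ-algebra, so that every set of flats is an event. -/
instance : MeasurableSpace (Flat n k) := ⊤

instance : DiscreteMeasurableSpace (Flat n k) := ⟨fun _ => trivial⟩

instance : IsProbabilityMeasure (uniformOn (Set.univ : Set (Flat n k))) :=
  isProbabilityMeasure_uniformOn Set.finite_univ Set.univ_nonempty

theorem measureReal_uniformOn_univ_mem (hkn : k ≤ n) (x : F2n n) :
    (uniformOn Set.univ).real {W : Flat n k | x ∈ W.1} = ((2 : ℝ) ^ k)⁻¹ := by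
  have hcard : (Finset.card {W : Flat n k | x ∈ W.1} : ℝ) * 2 ^ k = Fintype.card (Flat n k) := by
    exact_mod_cast card_filter_mem_mul_two_pow hkn x
  have hpos : (0 : ℝ) < Fintype.card (Flat n k) := by exact_mod_cast Fintype.card_pos
  rw [← Finset.coe_filter_univ, measureReal_uniformOn_univ_finset]
  rw [← hcard] at hpos ⊢
  exact div_mul_cancel_left₀ (left_ne_zero_of_mul hpos.ne') _

theorem measureReal_uniformOn_univ_notMem (hkn : k ≤ n) (x : F2n n) :
    (uniformOn Set.univ).real {W : Flat n k | x ∉ W.1} = 1 - ((2 : ℝ) ^ k)⁻¹ := by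
  rw [← measureReal_uniformOn_univ_mem hkn x]
  exact probReal_compl_eq_one_sub (MeasurableSet.of_discrete (s := {W : Flat n k | x ∈ W.1}))

end Flat

theorem prob_measureReal_singleton {β : Type*} [Fintype β] [MeasurableSpace β]
    [MeasurableSingletonClass β] (μ : Measure β) [IsFiniteMeasure μ] (E : Set β) :
    prob (fun b => μ.real {b}) E = μ.real E := by
  rw [prob, ← Finset.sum_filter, sum_measureReal_singleton, Finset.coe_filter_univ,
    Set.ofPred_mem_eq]

theorem Punif_eq_measureReal_pi_singleton (n k m : ℕ) :
    Punif n k m =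
      fun V => (Measure.pi fun _ : Fin m => uniformOn (Set.univ : Set (Flat n k))).real {V} := by
  funext V
  rw [measureReal_def, Measure.pi_singleton, ENNReal.toReal_prod]
  refine Finset.prod_congr rfl fun j _ => ?_
  have hsingleton := measureReal_uniformOn_univ_finset {V j}
  rw [Finset.coe_singleton, Finset.card_singleton, Nat.cast_one, one_div] at hsingleton
  exact hsingleton.symm

theorem exists_satCount_eq_maxSat {n k m : ℕ} (V : Fin m → Flat n k) :
    ∃ x, satCount n k m V x = maxSat n k m V := by
  obtain ⟨x, -, hx⟩ :=
    Finset.exists_mem_eq_sup Finset.univ Finset.univ_nonempty (satCount n k m V)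
  exact ⟨x, hx.symm⟩

theorem stmt15 (n k m : ℕ) (hk : 1 ≤ k) (hkn : k ≤ n) (hm : 1 ≤ m) (α : ℝ) (hα : 0 < α) :
    prob (Punif n k m)
        {V | ((1 - ((2:ℝ)^k)⁻¹) + α) * m < (maxSat n k m V : ℝ)}
      ≤ (2:ℝ)^n * Real.exp (-2 * α^2 * m) := by
  have htail := measureReal_pi_exists_add_mul_le_card_mem_le (ι := Fin m)
    (μ := uniformOn (Set.univ : Set (Flat n k))) (A := fun x => {W | x ∉ W.1})
    (fun x => MeasurableSet.of_discrete)
    (fun x => (Flat.measureReal_uniformOn_univ_notMem hkn x).le) hα.le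
  have hpoints : (Fintype.card (F2n n) : ℝ) = 2 ^ n := by
    rw [Fintype.card_fun, ZMod.card, Fintype.card_fin, Nat.cast_pow, Nat.cast_ofNat]
  rw [hpoints, Fintype.card_fin] at htail
  rw [Punif_eq_measureReal_pi_singleton, prob_measureReal_singleton]
  refine le_trans (measureReal_mono fun V hV => ?_) htail
  obtain ⟨x, hx⟩ := exists_satCount_eq_maxSat V
  rw [Set.mem_ofPred, ← hx] at hV
  exact ⟨x, hV.le⟩
end
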